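/- Let p ∈ (1,∞), p ≠ 2, and let {X_n}_{n=1}^∞ be a nested family of finite-dimensional strictly convex Banach spaces, with X = (⊕_{n=1}^∞ X_n)_p. Then: (i) for every ε > 0 and every C ≥ 1, every locally finite metric space all of whose finite subsets admit C-bilipschitz embeddings into X admits a ((1+ε)·C)-bilipschitz embedding into X; and (ii) there exists a locally finite metric space M whose finite subsets all admit isometric embeddings into X but which admits no isometric embedding into X. -/

import Mathlib

open scoped ENNReal

/-- A metric space is locally finite if every closed ball of finite radius is finite. -/
def MetricLocallyFinite (A : Type*) [MetricSpace A] : Prop :=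
  ∀ (x : A) (R : ℝ), (Metric.closedBall x R).Finite

/-- `f` is a `C`-bilipschitz embedding: there is `r > 0` with
`r * d(u,v) ≤ d(f u, f v) ≤ r * C * d(u,v)` for all `u, v`. -/
def IsBilipschitzEmbedding {A Y : Type*} [MetricSpace A] [MetricSpace Y]
    (C : ℝ) (f : A → Y) : Prop :=
  ∃ r : ℝ, 0 < r ∧ ∀ u v : A,
    r * dist u v ≤ dist (f u) (f v) ∧ dist (f u) (f v) ≤ r * C * dist u v

/-
Gluing. Write `X` for the sum. Given embeddings of the balls about a base point into a space `E`,
weight them by the coordinates of a curve of unit vectors in `ℓ_p` traversed at speed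
proportional to the logarithm of the distance to the base point. The weights vary so slowly that
the resulting map into `ℓ_p(E)` is bilipschitz with almost the same constant. Since the `X n` embed
isometrically into one another, `ℓ_p(X)` embeds isometrically into `X`.

The counterexample. In `L_p` of a sequence of fair coin tosses, with `A k` the event that the `k`-th
toss is heads, take the points `n • 1 + 1_{A k}` with `k ≤ n`. Finite sets of simple functions embed
isometrically into `X`. By strict convexity an isometry of all these points into `X` sends `n • 1 +
1_{A k}` to `n • u + w k` for some unit vector `u`. The summands being finite-dimensional,
differences of a subsequence of `w` tend to `0` coordinatewise, so by the Brezis-Lieb lemma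
`‖1 + (1_{A k} - 1_{A l})‖ ^ p = 1 + ‖1_{A k} - 1_{A l}‖ ^ p`, that is, `2 ^ p = 4`.
-/

open Filter Topology

section CoordinateBounds

variable {ι : Type*} {E F : ι → Type*} [∀ i, NormedAddCommGroup (E i)]
  [∀ i, NormedAddCommGroup (F i)] {p : ℝ≥0∞} {K : ℝ}

lemma memℓp_of_norm_le_mul [∀ i, NormedSpace ℝ (F i)] (w : lp F p) {v : ∀ i, E i}
    (h : ∀ i, ‖v i‖ ≤ K * ‖w i‖) : Memℓp v p := by
  refine ((lp.memℓp w).const_smul K).mono' fun i => (h i).trans ?_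
  rw [Pi.smul_apply, norm_smul]
  exact mul_le_mul_of_nonneg_right (le_abs_self K) (norm_nonneg _)

lemma norm_le_mul_norm_of_forall [∀ i, NormedSpace ℝ (F i)] [Fact (1 ≤ p)] (hK : 0 ≤ K)
    {v : lp E p} {w : lp F p} (h : ∀ i, ‖v i‖ ≤ K * ‖w i‖) : ‖v‖ ≤ K * ‖w‖ := by
  have hp : p ≠ 0 := (zero_lt_one.trans_le Fact.out).ne'
  rw [← Real.norm_of_nonneg hK, ← norm_smul]
  refine lp.norm_mono hp fun i => ?_
  rw [lp.coeFn_smul, Pi.smul_apply, norm_smul, Real.norm_of_nonneg hK]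
  exact h i

lemma mul_norm_le_norm_of_forall [∀ i, NormedSpace ℝ (F i)] [Fact (1 ≤ p)] (hK : 0 ≤ K)
    {v : lp E p} {w : lp F p} (h : ∀ i, K * ‖w i‖ ≤ ‖v i‖) : K * ‖w‖ ≤ ‖v‖ := by
  have hp : p ≠ 0 := (zero_lt_one.trans_le Fact.out).ne'
  rw [← Real.norm_of_nonneg hK, ← norm_smul]
  refine lp.norm_mono hp fun i => ?_
  rw [lp.coeFn_smul, Pi.smul_apply, norm_smul, Real.norm_of_nonneg hK]
  exact h i

end CoordinateBounds

section TentPath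

/-- The piecewise linear bump of height `1` on `[i - 1, i + 1]`, evaluated at `s`. -/
noncomputable def tent (s : ℝ) (i : ℕ) : ℝ := max 0 (1 - |s - i|)

lemma tent_eq_zero {s : ℝ} {i : ℕ} (h : 1 ≤ |s - i|) : tent s i = 0 :=
  max_eq_left (by linarith)

lemma tent_eq_zero_of_add_one_le {s : ℝ} {i : ℕ} (h : (i : ℝ) + 1 ≤ s) : tent s i = 0 :=
  tent_eq_zero (by linarith [le_abs_self (s - i)])

lemma abs_tent_sub_tent_le (s t : ℝ) (i : ℕ) : |tent s i - tent t i| ≤ |s - t| :=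
  calc |tent s i - tent t i|
      ≤ max |(0 : ℝ) - 0| |1 - |s - i| - (1 - |t - i|)| := abs_max_sub_max_le_max _ _ _ _
    _ = |(|t - i| - |s - i|)| := by
      rw [sub_zero, abs_zero, max_eq_right (abs_nonneg _), sub_sub_sub_cancel_left]
    _ ≤ |t - i - (s - i)| := abs_abs_sub_abs_le_abs_sub _ _
    _ = |s - t| := by rw [sub_sub_sub_cancel_right, abs_sub_comm]

/-- The two indices at which `tent s` can be nonzero when `0 ≤ s`. -/
noncomputable def tentSupport (s : ℝ) : Finset ℕ := {⌊s⌋₊, ⌊s⌋₊ + 1}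

lemma tent_eq_zero_of_notMem {s : ℝ} (hs : 0 ≤ s) {i : ℕ} (hi : i ∉ tentSupport s) :
    tent s i = 0 := by
  simp only [tentSupport, Finset.mem_insert, Finset.mem_singleton, not_or] at hi
  have hle := Nat.floor_le hs
  have hlt := Nat.lt_floor_add_one s
  rcases lt_or_gt_of_ne hi.1 with h | h
  · have : (i : ℝ) + 1 ≤ ⌊s⌋₊ := by exact_mod_cast h
    exact tent_eq_zero_of_add_one_le (by linarith)
  · have : (⌊s⌋₊ : ℝ) + 2 ≤ i := by exact_mod_cast (show ⌊s⌋₊ + 2 ≤ i by omega)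
    exact tent_eq_zero (by linarith [neg_le_abs (s - i)])

variable (p : ℝ≥0∞)

/-- The curve `s ↦ (tent s i)_i` in `ℓ_p`, for `0 ≤ s`. -/
noncomputable def tentPath (s : ℝ) : lp (fun _ : ℕ => ℝ) p :=
  ∑ i ∈ tentSupport s, lp.single p i (tent s i)

lemma sum_single_tent_apply {s : ℝ} (hs : 0 ≤ s) {S : Finset ℕ} (hS : tentSupport s ⊆ S) :
    ((∑ i ∈ S, lp.single p i (tent s i) : lp (fun _ : ℕ => ℝ) p) : ℕ → ℝ) = tent s := by
  ext i
  simp only [lp.coeFn_sum, Finset.sum_apply, lp.coeFn_single, Finset.sum_pi_single]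
  split_ifs with hi
  · rfl
  · exact (tent_eq_zero_of_notMem hs fun h => hi (hS h)).symm

lemma coe_tentPath {s : ℝ} (hs : 0 ≤ s) : (tentPath p s : ℕ → ℝ) = tent s :=
  sum_single_tent_apply p hs subset_rfl

variable [Fact (1 ≤ p)]

lemma half_le_norm_tentPath {s : ℝ} (hs : 0 ≤ s) : 1 / 2 ≤ ‖tentPath p s‖ := by
  have tent_le (i : ℕ) : 1 - |s - i| ≤ ‖tentPath p s‖ :=
    calc 1 - |s - i| ≤ tentPath p s i := by rw [coe_tentPath p hs]; exact le_max_right _ _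
      _ ≤ ‖tentPath p s i‖ := le_abs_self _
      _ ≤ ‖tentPath p s‖ :=
        lp.norm_apply_le_norm (zero_lt_one.trans_le (Fact.out (p := 1 ≤ p))).ne' _ _
  have hle := Nat.floor_le hs
  have hlt := Nat.lt_floor_add_one s
  have hleft := tent_le ⌊s⌋₊
  have hright := tent_le (⌊s⌋₊ + 1)
  rw [abs_of_nonneg (by linarith)] at hleft
  rw [abs_of_nonpos (by push_cast; linarith)] at hright
  push_cast at hright
  linarith

lemma norm_tentPath_sub_le {s t : ℝ} (hs : 0 ≤ s) (ht : 0 ≤ t) :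
    ‖tentPath p s - tentPath p t‖ ≤ 4 * |s - t| := by
  have hp : 0 < p := zero_lt_one.trans_le Fact.out
  set S := tentSupport s ∪ tentSupport t
  have hcard : (S.card : ℝ) ≤ 4 := by
    have : S.card ≤ 2 + 2 := (Finset.card_union_le _ _).trans
      (add_le_add Finset.card_le_two Finset.card_le_two)
    exact_mod_cast this
  have hsub : tentPath p s - tentPath p t = ∑ i ∈ S, lp.single p i (tent s i - tent t i) := by
    apply lp.ext
    simp only [lp.single_sub, Finset.sum_sub_distrib, lp.coeFn_sub]
    rw [coe_tentPath p hs, coe_tentPath p ht,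
      sum_single_tent_apply p hs Finset.subset_union_left,
      sum_single_tent_apply p ht Finset.subset_union_right]
  calc ‖tentPath p s - tentPath p t‖ ≤ ∑ _i ∈ S, |s - t| := by
        rw [hsub]
        refine norm_sum_le_of_le _ fun i _ => ?_
        rw [lp.norm_single hp]
        exact abs_tent_sub_tent_le s t i
    _ = S.card * |s - t| := by rw [Finset.sum_const, nsmul_eq_mul]
    _ ≤ 4 * |s - t| := mul_le_mul_of_nonneg_right hcard (abs_nonneg _)

end TentPath

lemma norm_mul_norm_normalize_sub_le {V : Type*} [NormedAddCommGroup V] [NormedSpace ℝ V]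
    (x y : V) :
    ‖x‖ * ‖NormedSpace.normalize x - NormedSpace.normalize y‖ ≤ 2 * ‖x - y‖ := by
  have hsplit : ‖x‖ • (NormedSpace.normalize x - NormedSpace.normalize y) =
      (x - y) - (‖x‖ - ‖y‖) • NormedSpace.normalize y := by
    rw [smul_sub, sub_smul, NormedSpace.norm_smul_normalize, NormedSpace.norm_smul_normalize]
    abel
  have hunit : ‖NormedSpace.normalize y‖ ≤ 1 := by
    rw [NormedSpace.normalize, norm_smul, norm_inv, norm_norm]
    exact inv_mul_le_one
  calc ‖x‖ * ‖NormedSpace.normalize x - NormedSpace.normalize y‖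
      = ‖(x - y) - (‖x‖ - ‖y‖) • NormedSpace.normalize y‖ := by
        rw [← hsplit, norm_smul, norm_norm]
    _ ≤ ‖x - y‖ + |‖x‖ - ‖y‖| * ‖NormedSpace.normalize y‖ := by
        rw [← Real.norm_eq_abs, ← norm_smul]; exact norm_sub_le _ _
    _ ≤ ‖x - y‖ + ‖x - y‖ * 1 := by
        gcongr
        exact abs_norm_sub_norm_le x y
    _ = 2 * ‖x - y‖ := by ring

section SlowlyVaryingWeights

lemma abs_log_one_add_sub_mul_le {a b : ℝ} (ha : 0 ≤ a) (hab : a ≤ b) :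
    |Real.log (1 + b) - Real.log (1 + a)| * a ≤ b - a := by
  have hlog : Real.log (1 + a) ≤ Real.log (1 + b) := Real.log_le_log (by linarith) (by linarith)
  calc |Real.log (1 + b) - Real.log (1 + a)| * a
      ≤ |Real.log (1 + b) - Real.log (1 + a)| * (1 + a) := by gcongr; linarith
    _ = Real.log ((1 + b) / (1 + a)) * (1 + a) := by
        rw [abs_of_nonneg (by linarith), Real.log_div (by linarith) (by linarith)]
    _ ≤ ((1 + b) / (1 + a) - 1) * (1 + a) := by
        gcongr
        exact Real.log_le_sub_one_of_pos (by have := ha.trans hab; positivity)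
    _ = b - a := by field_simp; ring

lemma exists_slowlyVarying_weights (p : ℝ≥0∞) [Fact (1 ≤ p)] {A : Type*} [PseudoMetricSpace A]
    (O : A) {η : ℝ} (hη : 0 < η) :
    ∃ (α : A → lp (fun _ : ℕ => ℝ) p) (R : ℕ → ℝ), (∀ x, ‖α x‖ = 1) ∧
      (∀ x i, α x i ≠ 0 → dist x O ≤ R i) ∧
      ∀ x y, dist y O ≤ dist x O → ‖α x - α y‖ * dist y O ≤ η * dist x y := by
  set δ := η / 16 with hδ
  have hδ_pos : 0 < δ := by positivity
  let s (x : A) : ℝ := δ * Real.log (1 + dist x O)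
  have hs (x : A) : 0 ≤ s x :=
    mul_nonneg hδ_pos.le (Real.log_nonneg (le_add_of_nonneg_right dist_nonneg))
  refine ⟨fun x => NormedSpace.normalize (tentPath p (s x)), fun i => Real.exp ((i + 1) / δ),
    fun x => ?_, fun x i => ?_, fun x y hyx => ?_⟩
  · rw [NormedSpace.norm_normalize_eq_one_iff, ← norm_pos_iff]
    linarith [half_le_norm_tentPath p (hs x)]
  · contrapose!
    intro hx
    have hexp : (i + 1) / δ ≤ Real.log (1 + dist x O) :=
      (Real.le_log_iff_exp_le (by positivity)).2 (by linarith)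
    have hi : (i : ℝ) + 1 ≤ s x := by rw [div_le_iff₀' hδ_pos] at hexp; exact hexp
    rw [NormedSpace.normalize, lp.coeFn_smul, Pi.smul_apply, coe_tentPath p (hs x),
      tent_eq_zero_of_add_one_le hi, smul_zero]
  · have hnormalize := norm_mul_norm_normalize_sub_le (tentPath p (s x)) (tentPath p (s y))
    have hhalf := half_le_norm_tentPath p (hs x)
    have hpath := norm_tentPath_sub_le p (hs x) (hs y)
    have hweights : ‖NormedSpace.normalize (tentPath p (s x)) -
        NormedSpace.normalize (tentPath p (s y))‖ ≤ 16 * |s x - s y| := by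
      nlinarith [norm_nonneg (NormedSpace.normalize (tentPath p (s x)) -
        NormedSpace.normalize (tentPath p (s y)))]
    calc _ ≤ 16 * |s x - s y| * dist y O := by gcongr
      _ = η * (|Real.log (1 + dist x O) - Real.log (1 + dist y O)| * dist y O) := by
        simp only [s, ← mul_sub, abs_mul, abs_of_pos hδ_pos]; rw [hδ]; ring
      _ ≤ η * (dist x O - dist y O) := by
        gcongr
        exact abs_log_one_add_sub_mul_le dist_nonneg hyx
      _ ≤ η * dist x y := by
        gcongr
        linarith [dist_triangle x y O]

end SlowlyVaryingWeights

section Gluing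

variable {A E : Type*} [MetricSpace A] [NormedAddCommGroup E] [NormedSpace ℝ E] {C : ℝ}

lemma exists_map_of_bilipschitz_closedBall (hC : 0 ≤ C) (O : A) (R : ℝ)
    (h : ∃ f : Metric.closedBall O R → E, IsBilipschitzEmbedding C f) :
    ∃ g : A → E, (∀ u, ‖g u‖ ≤ C * dist u O) ∧ ∀ u v, dist u O ≤ R → dist v O ≤ R →
      dist u v ≤ ‖g u - g v‖ ∧ ‖g u - g v‖ ≤ C * dist u v := by
  classical
  obtain ⟨f, r, hr, hf⟩ := h
  let F (u : A) : E := if hu : dist u O ≤ R then r⁻¹ • f ⟨u, hu⟩ else 0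
  let g (u : A) : E := if dist u O ≤ R then F u - F O else 0
  have hF (u v : A) (hu : dist u O ≤ R) (hv : dist v O ≤ R) :
      dist u v ≤ ‖F u - F v‖ ∧ ‖F u - F v‖ ≤ C * dist u v := by
    obtain ⟨hlower, hupper⟩ := hf ⟨u, hu⟩ ⟨v, hv⟩
    simp only [F, dif_pos hu, dif_pos hv, ← smul_sub, norm_smul, norm_inv,
      Real.norm_of_nonneg hr.le, ← dist_eq_norm]
    rw [le_inv_mul_iff₀ hr, inv_mul_le_iff₀ hr, ← mul_assoc]
    exact ⟨hlower, hupper⟩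
  refine ⟨g, fun u => ?_, fun u v hu hv => ?_⟩
  · by_cases hu : dist u O ≤ R
    · have hO : dist O O ≤ R := (dist_self O).trans_le (dist_nonneg.trans hu)
      simpa only [g, if_pos hu] using (hF u O hu hO).2
    · simpa only [g, if_neg hu, norm_zero] using mul_nonneg hC dist_nonneg
  · simpa only [g, if_pos hu, if_pos hv, sub_sub_sub_cancel_right] using hF u v hu hv

-- `φ x = (α x i • g i x)_i`; the difference `φ x - φ y` is compared with
-- `(α x i • (g i x - g i y))_i`, and the slow variation of the weights makes the error small.
lemma exists_glued_map {p : ℝ≥0∞} [Fact (1 ≤ p)] {η : ℝ} (hη : 0 < η) (hC : 0 ≤ C) (O : A)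
    (h : ∀ R, ∃ f : Metric.closedBall O R → E, IsBilipschitzEmbedding C f) :
    ∃ φ : A → lp (fun _ : ℕ => E) p, ∀ x y,
      (1 - η * C) * dist x y ≤ dist (φ x) (φ y) ∧ dist (φ x) (φ y) ≤ (C + η * C) * dist x y := by
  obtain ⟨α, R, hα_norm, hα_supp, hα_slow⟩ := exists_slowlyVarying_weights p O hη
  choose g hg_norm hg using fun i => exists_map_of_bilipschitz_closedBall hC O (R i) (h (R i))
  have hmul (β : lp (fun _ : ℕ => ℝ) p) (y : A) (i : ℕ) :
      ‖β i • g i y‖ ≤ C * dist y O * ‖β i‖ := by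
    rw [norm_smul, mul_comm]
    exact mul_le_mul_of_nonneg_right (hg_norm i y) (norm_nonneg _)
  let φ (x : A) : lp (fun _ : ℕ => E) p :=
    ⟨fun i => α x i • g i x, memℓp_of_norm_le_mul (α x) (hmul (α x) x)⟩
  suffices key : ∀ x y, dist y O ≤ dist x O → (1 - η * C) * dist x y ≤ dist (φ x) (φ y) ∧
      dist (φ x) (φ y) ≤ (C + η * C) * dist x y by
    refine ⟨φ, fun x y => (le_total (dist y O) (dist x O)).elim (key x y) fun hxy => ?_⟩
    simpa only [dist_comm] using key y x hxy
  intro x y hyx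
  let err : lp (fun _ : ℕ => E) p :=
    ⟨fun i => (α x - α y) i • g i y, memℓp_of_norm_le_mul (α x - α y) (hmul (α x - α y) y)⟩
  have herr : ‖err‖ ≤ η * C * dist x y :=
    calc ‖err‖ ≤ C * dist y O * ‖α x - α y‖ :=
          norm_le_mul_norm_of_forall (by positivity) (hmul (α x - α y) y)
      _ = C * (‖α x - α y‖ * dist y O) := by ring
      _ ≤ C * (η * dist x y) := mul_le_mul_of_nonneg_left (hα_slow x y hyx) hC
      _ = η * C * dist x y := by ring
  have hmain (i : ℕ) : (φ x - φ y - err) i = α x i • (g i x - g i y) := by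
    change α x i • g i x - α y i • g i y - (α x i - α y i) • g i y = _
    module
  have hmain_bounds (i : ℕ) : dist x y * ‖α x i‖ ≤ ‖(φ x - φ y - err) i‖ ∧
      ‖(φ x - φ y - err) i‖ ≤ C * dist x y * ‖α x i‖ := by
    rw [hmain, norm_smul, mul_comm ‖α x i‖]
    rcases eq_or_ne (α x i) 0 with hi | hi
    · simp only [hi, norm_zero, mul_zero, le_refl, and_self]
    · have hx := hα_supp x i hi
      obtain ⟨hlower, hupper⟩ := hg i x y hx (hyx.trans hx)
      exact ⟨by gcongr, by gcongr⟩
  have hlower := mul_norm_le_norm_of_forall dist_nonneg fun i => (hmain_bounds i).1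
  have hupper := norm_le_mul_norm_of_forall (by positivity) fun i => (hmain_bounds i).2
  rw [hα_norm, mul_one] at hlower hupper
  rw [dist_eq_norm (φ x)]
  constructor
  · linarith [norm_sub_le (φ x - φ y) err]
  · linarith [norm_le_norm_add_norm_sub' (φ x - φ y) err]

theorem exists_bilipschitz_lp_of_finite_subsets (p : ℝ≥0∞) [Fact (1 ≤ p)] {ε : ℝ} (hε : 0 < ε)
    (hC : 1 ≤ C) (hA : MetricLocallyFinite A)
    (h : ∀ S : Set A, S.Finite → ∃ f : S → E, IsBilipschitzEmbedding C f) :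
    ∃ f : A → lp (fun _ : ℕ => E) p, IsBilipschitzEmbedding ((1 + ε) * C) f := by
  rcases isEmpty_or_nonempty A with hempty | ⟨⟨O⟩⟩
  · exact ⟨isEmptyElim, 1, one_pos, isEmptyElim⟩
  set η := ε / (1 + C * (1 + ε))
  have hη_pos : 0 < η := by positivity
  have hηε : η * (1 + C * (1 + ε)) = ε := div_mul_cancel₀ _ (by positivity)
  obtain ⟨φ, hφ⟩ := exists_glued_map (p := p) hη_pos (by linarith) O fun R => h _ (hA O R)
  refine ⟨φ, 1 - η * C, by nlinarith, fun x y => ⟨(hφ x y).1, (hφ x y).2.trans_eq ?_⟩⟩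
  linear_combination C * dist x y * hηε

end Gluing

section Nested

lemma hasSum_norm_rpow_of_lp_lp {ι κ : Type*} {E : ι → κ → Type*}
    [∀ i j, NormedAddCommGroup (E i j)] {p : ℝ≥0∞} [Fact (1 ≤ p)] (hp : p ≠ ∞)
    (y : lp (fun i => lp (E i) p) p) :
    HasSum (fun q : ι × κ => ‖y q.1 q.2‖ ^ p.toReal) (‖y‖ ^ p.toReal) := by
  have hp0 : 0 < p.toReal := ENNReal.toReal_pos (zero_lt_one.trans_le Fact.out).ne' hp
  have hinner (i : ι) := lp.hasSum_norm hp0 (y i)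
  have houter := lp.hasSum_norm hp0 y
  have hsummable : Summable fun q : ι × κ => ‖y q.1 q.2‖ ^ p.toReal := by
    rw [summable_prod_of_nonneg fun q => by positivity]
    exact ⟨fun i => (hinner i).summable, by simpa only [(hinner _).tsum_eq] using houter.summable⟩
  rw [← (hsummable.hasSum.prod_fiberwise hinner).unique houter]
  exact hsummable.hasSum

variable {𝕜 : Type*} [NormedField 𝕜] {X : ℕ → Type*} [∀ n, NormedAddCommGroup (X n)]
  [∀ n, NormedSpace 𝕜 (X n)]

lemma nonempty_linearIsometry_of_le (hX : ∀ n, Nonempty (X n →ₗᵢ[𝕜] X (n + 1))) {m n : ℕ}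
    (h : m ≤ n) : Nonempty (X m →ₗᵢ[𝕜] X n) := by
  induction n, h using Nat.le_induction with
  | base => exact ⟨LinearIsometry.id⟩
  | succ n _ ih =>
    obtain ⟨f⟩ := ih
    obtain ⟨g⟩ := hX n
    exact ⟨g.comp f⟩

-- The `n`-th coordinate of the `m`-th block goes to position `Nat.pair m n`; since
-- `n ≤ Nat.pair m n`, the nesting provides room for it there.
theorem nonempty_linearIsometry_lp_lp {p : ℝ≥0∞} [Fact (1 ≤ p)] (hp : p ≠ ∞)
    (hX : ∀ n, Nonempty (X n →ₗᵢ[𝕜] X (n + 1))) :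
    Nonempty (lp (fun _ : ℕ => lp X p) p →ₗᵢ[𝕜] lp X p) := by
  have hp0 : 0 < p.toReal := ENNReal.toReal_pos (zero_lt_one.trans_le Fact.out).ne' hp
  have J (k : ℕ) : X k.unpair.2 →ₗᵢ[𝕜] X k :=
    (nonempty_linearIsometry_of_le hX (Nat.unpair_right_le k)).some
  have hsum (y : lp (fun _ : ℕ => lp X p) p) :
      HasSum (fun k : ℕ => ‖J k (y k.unpair.1 k.unpair.2)‖ ^ p.toReal) (‖y‖ ^ p.toReal) := by
    simp only [LinearIsometry.norm_map]
    exact (Nat.pairEquiv.symm.hasSum_iff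
      (f := fun q : ℕ × ℕ => ‖y q.1 q.2‖ ^ p.toReal)).2 (hasSum_norm_rpow_of_lp_lp hp y)
  let Φ : lp (fun _ : ℕ => lp X p) p →ₗ[𝕜] lp X p :=
    { toFun := fun y => ⟨fun k => J k (y k.unpair.1 k.unpair.2), memℓp_gen (hsum y).summable⟩
      map_add' := fun y z => lp.ext <| funext fun k => map_add (J k) _ _
      map_smul' := fun c y => lp.ext <| funext fun k => map_smul (J k) _ _ }
  refine ⟨⟨Φ, fun y => ?_⟩⟩
  exact (Real.rpow_left_inj (norm_nonneg _) (norm_nonneg _) hp0.ne').1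
    ((lp.hasSum_norm hp0 (Φ y)).unique (hsum y))

end Nested

section StrictConvexity

lemma strictConvexOn_norm_rpow {V : Type*} [NormedAddCommGroup V] [NormedSpace ℝ V]
    [StrictConvexSpace ℝ V] {q : ℝ} (hq : 1 < q) :
    StrictConvexOn ℝ Set.univ fun x : V => ‖x‖ ^ q := by
  refine ⟨convex_univ, fun x _ y _ hxy a b ha hb hab => ?_⟩
  rcases eq_or_ne ‖x‖ ‖y‖ with heq | hne
  · calc ‖a • x + b • y‖ ^ q < ‖x‖ ^ q :=
          Real.rpow_lt_rpow (norm_nonneg _) (norm_combo_lt_of_ne le_rfl heq.ge hxy ha hb hab)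
            (by linarith)
      _ = a • ‖x‖ ^ q + b • ‖y‖ ^ q := by rw [← heq, ← add_smul, hab, one_smul]
  · calc ‖a • x + b • y‖ ^ q ≤ (a * ‖x‖ + b * ‖y‖) ^ q := by
          refine Real.rpow_le_rpow (norm_nonneg _) ((norm_add_le _ _).trans_eq ?_) (by linarith)
          rw [norm_smul, norm_smul, Real.norm_of_nonneg ha.le, Real.norm_of_nonneg hb.le]
      _ < a • ‖x‖ ^ q + b • ‖y‖ ^ q :=
          (strictConvexOn_rpow hq).2 (norm_nonneg x) (norm_nonneg y) hne ha hb hab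

theorem strictConvexSpace_lp {ι : Type*} {X : ι → Type*} [∀ i, NormedAddCommGroup (X i)]
    [∀ i, NormedSpace ℝ (X i)] [∀ i, StrictConvexSpace ℝ (X i)] {p : ℝ≥0∞} [Fact (1 ≤ p)]
    (hp : 1 < p.toReal) : StrictConvexSpace ℝ (lp X p) := by
  refine StrictConvexSpace.of_norm_add_ne_two fun x y hx hy hxy hadd => ?_
  have hp0 : 0 < p.toReal := by linarith
  have hconvex (i : ι) := strictConvexOn_norm_rpow (V := X i) hp
  obtain ⟨i, hi⟩ : ∃ i, x i ≠ y i := Function.ne_iff.1 fun h => hxy (lp.ext h)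
  have hcoord_le (j : ι) : ‖(1 / 2 : ℝ) • x j + (1 / 2 : ℝ) • y j‖ ^ p.toReal ≤
      1 / 2 * ‖x j‖ ^ p.toReal + 1 / 2 * ‖y j‖ ^ p.toReal :=
    (hconvex j).convexOn.2 trivial trivial one_half_pos.le one_half_pos.le (add_halves 1)
  have hcoord_lt : ‖(1 / 2 : ℝ) • x i + (1 / 2 : ℝ) • y i‖ ^ p.toReal <
      1 / 2 * ‖x i‖ ^ p.toReal + 1 / 2 * ‖y i‖ ^ p.toReal :=
    (hconvex i).2 trivial trivial hi one_half_pos one_half_pos (add_halves 1)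
  have hlt := hasSum_lt hcoord_le hcoord_lt
    (lp.hasSum_norm hp0 ((1 / 2 : ℝ) • x + (1 / 2 : ℝ) • y))
    (((lp.hasSum_norm hp0 x).mul_left _).add ((lp.hasSum_norm hp0 y).mul_left _))
  rw [← smul_add, norm_smul, hadd, hx, hy] at hlt
  norm_num at hlt

lemma eq_add_smul_of_dist_eq {Y : Type*} [NormedAddCommGroup Y] [NormedSpace ℝ Y]
    [StrictConvexSpace ℝ Y] {g : ℕ → Y} {c : ℝ}
    (hg : ∀ m n : ℕ, dist (g m) (g n) = |(m : ℝ) - n| * c) (n : ℕ) :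
    g n = g 0 + (n : ℝ) • (g 1 - g 0) := by
  rcases Nat.eq_zero_or_pos n with rfl | hn
  · simp
  have hn1 : (1 : ℝ) ≤ n := by exact_mod_cast hn
  have hline : g 1 = AffineMap.lineMap (g 0) (g n) (1 / n : ℝ) := by
    apply eq_lineMap_of_dist_eq_mul_of_dist_eq_mul
    · rw [hg, hg, Nat.cast_zero, Nat.cast_one, zero_sub, zero_sub, abs_neg, abs_neg, abs_one,
        Nat.abs_cast]
      field_simp
    · rw [hg, hg, Nat.cast_zero, Nat.cast_one, zero_sub, abs_neg, Nat.abs_cast, abs_sub_comm,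
        abs_of_nonneg (by linarith)]
      field_simp
  rw [hline, AffineMap.lineMap_apply_module', add_sub_cancel_right, smul_smul,
    mul_one_div_cancel (by positivity), one_smul, add_sub_cancel]

end StrictConvexity

section Asymptotics

variable {ι : Type*} {E : ι → Type*} [∀ i, NormedAddCommGroup (E i)] {p : ℝ≥0∞}

lemma exists_subseq_tendsto_apply [Countable ι] [∀ i, ProperSpace (E i)] (hp : p ≠ 0)
    {w : ℕ → lp E p} {K : ℝ} (hw : ∀ k, ‖w k‖ ≤ K) :
    ∃ φ : ℕ → ℕ, StrictMono φ ∧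
      ∃ z : ∀ i, E i, ∀ i, Tendsto (fun k => w (φ k) i) atTop (𝓝 (z i)) := by
  have hcompact : IsCompact (Set.univ.pi fun i => Metric.closedBall (0 : E i) K) :=
    isCompact_univ_pi fun i => isCompact_closedBall 0 K
  obtain ⟨z, -, φ, hφ, hz⟩ := hcompact.tendsto_subseq (x := fun k => (w k : ∀ i, E i))
    fun k i _ => mem_closedBall_zero_iff.2 ((lp.norm_apply_le_norm hp (w k) i).trans (hw k))
  exact ⟨φ, hφ, z, tendsto_pi_nhds.1 hz⟩

lemma norm_rpow_sum_single_add [DecidableEq ι] (hp : 0 < p.toReal) (s : Finset ι)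
    (u : ∀ i, E i) (x : lp E p) :
    ‖∑ i ∈ s, lp.single p i (u i) + x‖ ^ p.toReal =
      ∑ i ∈ s, ‖u i + x i‖ ^ p.toReal + (‖x‖ ^ p.toReal - ∑ i ∈ s, ‖x i‖ ^ p.toReal) := by
  set y : lp E p := ∑ i ∈ s, lp.single p i (u i) + x with hy
  have hy_apply (i : ι) (hi : i ∈ s) : y i = u i + x i := by
    simp only [hy, lp.coeFn_add, lp.coeFn_sum, Pi.add_apply, Finset.sum_apply, lp.coeFn_single,
      Finset.sum_pi_single, if_pos hi]
  have htail : y - ∑ i ∈ s, lp.single p i (y i) = x - ∑ i ∈ s, lp.single p i (x i) := by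
    rw [Finset.sum_congr rfl fun i hi => by rw [hy_apply i hi, lp.single_add],
      Finset.sum_add_distrib, hy, add_sub_add_left_eq_sub]
  have hnorm_y := lp.norm_compl_sum_single hp y s
  have hhead : ∑ i ∈ s, ‖y i‖ ^ p.toReal = ∑ i ∈ s, ‖u i + x i‖ ^ p.toReal :=
    Finset.sum_congr rfl fun i hi => by rw [hy_apply i hi]
  rw [htail, lp.norm_compl_sum_single hp x s, hhead] at hnorm_y
  linarith

variable {κ : Type*} {l : Filter κ} {x : κ → lp E p} {a : ℝ}

lemma tendsto_norm_rpow_sum_single_add [DecidableEq ι] (hp : 0 < p.toReal)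
    (hx : ∀ i, Tendsto (fun k => x k i) l (𝓝 0))
    (hnorm : Tendsto (fun k => ‖x k‖) l (𝓝 a)) (s : Finset ι) (u : ∀ i, E i) :
    Tendsto (fun k => ‖∑ i ∈ s, lp.single p i (u i) + x k‖ ^ p.toReal) l
      (𝓝 (‖∑ i ∈ s, lp.single p i (u i)‖ ^ p.toReal + a ^ p.toReal)) := by
  simp only [norm_rpow_sum_single_add hp, lp.norm_sum_single hp]
  have hhead : Tendsto (fun k => ∑ i ∈ s, ‖u i + x k i‖ ^ p.toReal) l
      (𝓝 (∑ i ∈ s, ‖u i + 0‖ ^ p.toReal)) :=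
    tendsto_finsetSum _ fun i _ => ((hx i).const_add (u i)).norm.rpow_const (.inr hp.le)
  have htail : Tendsto (fun k => ∑ i ∈ s, ‖x k i‖ ^ p.toReal) l
      (𝓝 (∑ i ∈ s, ‖(0 : E i)‖ ^ p.toReal)) :=
    tendsto_finsetSum _ fun i _ => (hx i).norm.rpow_const (.inr hp.le)
  simp only [norm_zero, Real.zero_rpow hp.ne', Finset.sum_const_zero] at htail
  simp only [add_zero] at hhead
  simpa only [sub_zero] using hhead.add ((hnorm.rpow_const (.inr hp.le)).sub htail)

-- A special case of the Brezis-Lieb lemma: exact for finitely supported `u`, and the set of good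
-- `u` is closed because the maps `u ↦ ‖u + x k‖` are equicontinuous.
theorem tendsto_norm_add_rpow [Fact (1 ≤ p)] (hp : p ≠ ∞)
    (hx : ∀ i, Tendsto (fun k => x k i) l (𝓝 0))
    (hnorm : Tendsto (fun k => ‖x k‖) l (𝓝 a)) (u : lp E p) :
    Tendsto (fun k => ‖u + x k‖ ^ p.toReal) l (𝓝 (‖u‖ ^ p.toReal + a ^ p.toReal)) := by
  classical
  have hp0 : 0 < p.toReal := ENNReal.toReal_pos (zero_lt_one.trans_le Fact.out).ne' hp
  rcases l.eq_or_neBot with rfl | hl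
  · exact tendsto_bot
  have ha : 0 ≤ a := ge_of_tendsto' hnorm fun k => norm_nonneg _
  let L (u : lp E p) : ℝ := (‖u‖ ^ p.toReal + a ^ p.toReal) ^ p.toReal⁻¹
  have hL : Continuous L := (((continuous_norm.rpow_const fun _ => .inr hp0.le).add
    continuous_const).rpow_const fun _ => .inr (inv_nonneg.2 hp0.le))
  have hequi : Equicontinuous fun k (u : lp E p) => ‖u + x k‖ :=
    (LipschitzWith.uniformEquicontinuous _ 1 fun k => LipschitzWith.of_dist_le_mul fun u v => by
      rw [NNReal.coe_one, one_mul, ← dist_add_right u v (x k), dist_eq_norm (u + x k)]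
      exact abs_norm_sub_norm_le _ _).equicontinuous
  have hL_tendsto : Tendsto (fun k => ‖u + x k‖) l (𝓝 (L u)) := by
    refine (hequi.isClosed_setOfPred_tendsto hL).mem_of_tendsto (lp.hasSum_single hp u)
      (Eventually.of_forall fun s => ?_)
    have := (tendsto_norm_rpow_sum_single_add hp0 hx hnorm s u).rpow_const
      (p := p.toReal⁻¹) (.inr (inv_nonneg.2 hp0.le))
    simp only [Real.rpow_rpow_inv (norm_nonneg _) hp0.ne'] at this
    exact this
  have hL_rpow : L u ^ p.toReal = ‖u‖ ^ p.toReal + a ^ p.toReal :=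
    Real.rpow_inv_rpow (by positivity) hp0.ne'
  rw [← hL_rpow]
  exact hL_tendsto.rpow_const (.inr hp0.le)

end Asymptotics

section Fan

variable {F : Type*} [NormedAddCommGroup F] [NormedSpace ℝ F]

/-- The points `n v + a k` with `k ≤ n`: rays in the direction `v`, the `k`-th of which starts at
the `k`-th step. The restriction `k ≤ n` keeps the set locally finite when `a` is bounded. -/
def fan (v : F) (a : ℕ → F) : Set F := {x | ∃ n k : ℕ, k ≤ n ∧ x = (n : ℝ) • v + a k}

variable {v : F} {a : ℕ → F}

lemma mem_fan {n k : ℕ} (h : k ≤ n) : (n : ℝ) • v + a k ∈ fan v a := ⟨n, k, h, rfl⟩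

lemma fan_subset_addSubgroup {G : AddSubgroup F} (hv : v ∈ G) (ha : ∀ k, a k ∈ G) :
    fan v a ⊆ G := by
  rintro _ ⟨n, k, -, rfl⟩
  rw [Nat.cast_smul_eq_nsmul]
  exact G.add_mem (G.nsmul_mem hv n) (ha k)

lemma metricLocallyFinite_fan (hv : v ≠ 0) {K : ℝ} (ha : ∀ k, ‖a k‖ ≤ K) :
    MetricLocallyFinite (fan v a) := by
  intro x R
  obtain ⟨N, hN⟩ := exists_nat_ge ((R + ‖(x : F)‖ + K) / ‖v‖)
  rw [div_le_iff₀ (norm_pos_iff.2 hv)] at hN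
  have hfinite : Set.Finite ((fun q : ℕ × ℕ => (q.1 : ℝ) • v + a q.2) ''
      (Set.Iic N ×ˢ Set.Iic N)) :=
    ((Set.finite_Iic N).prod (Set.finite_Iic N)).image _
  refine (hfinite.preimage Subtype.val_injective.injOn).subset ?_
  rintro ⟨_, n, k, hkn, rfl⟩ hdist
  suffices hnN : n ≤ N from ⟨(n, k), ⟨hnN, hkn.trans hnN⟩, rfl⟩
  have hR : ‖(n : ℝ) • v + a k - x‖ ≤ R := by
    rw [← dist_eq_norm]; exact hdist
  have hsplit : (n : ℝ) • v = ((n : ℝ) • v + a k - x) + x - a k := by abel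
  have hn : n * ‖v‖ ≤ R + ‖(x : F)‖ + K :=
    calc n * ‖v‖ = ‖(n : ℝ) • v‖ := by rw [norm_smul, Real.norm_natCast]
      _ ≤ ‖(n : ℝ) • v + a k - x‖ + ‖(x : F)‖ + ‖a k‖ := by
        conv_lhs => rw [hsplit]
        exact (norm_sub_le _ _).trans (add_le_add_left (norm_add_le _ _) _)
      _ ≤ R + ‖(x : F)‖ + K := by gcongr; exact ha k
  exact_mod_cast le_of_mul_le_mul_right (hn.trans hN) (norm_pos_iff.2 hv)

lemma eq_zero_of_norm_smul_add_le {x y : F} {K : ℝ} {N : ℕ}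
    (h : ∀ n : ℕ, N ≤ n → ‖(n : ℝ) • x + y‖ ≤ K) : x = 0 := by
  by_contra hx
  obtain ⟨n, hn⟩ := exists_nat_gt ((K + ‖y‖) / ‖x‖)
  rw [div_lt_iff₀ (norm_pos_iff.2 hx)] at hn
  have hbound := h (max n N) (le_max_right n N)
  have hmax : (n : ℝ) ≤ (max n N : ℕ) := by exact_mod_cast le_max_left n N
  have hlower : (max n N : ℕ) * ‖x‖ ≤ ‖((max n N : ℕ) : ℝ) • x + y‖ + ‖y‖ := by
    simpa only [add_sub_cancel_right, norm_smul, Real.norm_natCast] using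
      norm_sub_le (((max n N : ℕ) : ℝ) • x + y) y
  nlinarith [norm_nonneg x]

variable {Y : Type*} [NormedAddCommGroup Y] [NormedSpace ℝ Y] [StrictConvexSpace ℝ Y]

-- Each ray is an arithmetic progression in `Y`; distinct rays have the same direction because they
-- stay at bounded distance from each other.
lemma exists_eq_smul_add_of_isometry_fan {f : fan v a → Y} (hf : Isometry f) :
    ∃ (u : Y) (w : ℕ → Y), ∀ (n k : ℕ) (h : k ≤ n),
      f ⟨(n : ℝ) • v + a k, mem_fan h⟩ = (n : ℝ) • u + w k := by
  let ray (k j : ℕ) : Y := f ⟨((k + j : ℕ) : ℝ) • v + a k, mem_fan (Nat.le_add_right k j)⟩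
  let dir (k : ℕ) : Y := ray k 1 - ray k 0
  let base (k : ℕ) : Y := ray k 0 - (k : ℝ) • dir k
  have hray (k i j : ℕ) : dist (ray k i) (ray k j) = |(i : ℝ) - j| * ‖v‖ := by
    rw [hf.dist_eq, Subtype.dist_eq, dist_add_right, dist_eq_norm, ← sub_smul, norm_smul,
      Nat.cast_add, Nat.cast_add, add_sub_add_left_eq_sub, Real.norm_eq_abs]
  have hf_apply (n k : ℕ) (h : k ≤ n) :
      f ⟨(n : ℝ) • v + a k, mem_fan h⟩ = (n : ℝ) • dir k + base k := by
    obtain ⟨j, rfl⟩ := Nat.exists_eq_add_of_le h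
    calc ray k j = ray k 0 + (j : ℝ) • dir k := eq_add_smul_of_dist_eq (hray k) j
      _ = ((k + j : ℕ) : ℝ) • dir k + base k := by simp only [base]; push_cast; module
  have hdir (k : ℕ) : dir k - dir 0 = 0 := by
    refine eq_zero_of_norm_smul_add_le (y := base k - base 0) (K := ‖a k - a 0‖) (N := k)
      fun n hn => ?_
    have hdist := hf.dist_eq ⟨_, mem_fan hn⟩ ⟨_, mem_fan n.zero_le⟩
    rw [hf_apply n k hn, hf_apply n 0 n.zero_le, Subtype.dist_eq, dist_add_left, dist_eq_norm,
      dist_eq_norm] at hdist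
    rw [← hdist]
    exact (congrArg norm (by module)).le
  exact ⟨dir 0, base, fun n k h => by rw [hf_apply n k h, sub_eq_zero.1 (hdir k)]⟩

lemma exists_norm_smul_add_sub_eq_of_isometry_fan {f : fan v a → Y} (hf : Isometry f) :
    ∃ (u : Y) (w : ℕ → Y), ∀ n k l : ℕ,
      ‖(n : ℝ) • u + (w k - w l)‖ = ‖(n : ℝ) • v + (a k - a l)‖ := by
  obtain ⟨u, w, huw⟩ := exists_eq_smul_add_of_isometry_fan hf
  refine ⟨u, w, fun n k l => ?_⟩
  have hk : k ≤ n + (k + l) := by omega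
  have hl : l ≤ k + l := Nat.le_add_left l k
  have hdist := hf.dist_eq ⟨_, mem_fan hk⟩ ⟨_, mem_fan hl⟩
  rw [huw _ _ hk, huw _ _ hl, Subtype.dist_eq, dist_eq_norm, dist_eq_norm] at hdist
  calc _ = _ := congrArg norm (by push_cast; module)
    _ = _ := hdist
    _ = _ := congrArg norm (by push_cast; module)

variable {ι : Type*} [Countable ι] {X : ι → Type*} [∀ i, NormedAddCommGroup (X i)]
  [∀ i, NormedSpace ℝ (X i)] [∀ i, FiniteDimensional ℝ (X i)] [∀ i, StrictConvexSpace ℝ (X i)]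

-- An isometry turns `a` into a bounded sequence in `ℓ_p`; differences along a coordinatewise
-- convergent subsequence are asymptotically disjoint from the image of `v`, so the `p`-th powers of
-- the norms would add up.
theorem not_exists_isometry_fan_lp {p : ℝ≥0∞} [Fact (1 ≤ p)] (hp1 : 1 < p) (hp : p ≠ ∞) {s t : ℝ}
    (hs : ∀ k l, k ≠ l → ‖a k - a l‖ = s) (ht : ∀ k l, k ≠ l → ‖v + (a k - a l)‖ = t)
    (hst : t ^ p.toReal ≠ ‖v‖ ^ p.toReal + s ^ p.toReal) :
    ¬ ∃ f : fan v a → lp X p, Isometry f := by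
  rintro ⟨f, hf⟩
  have : ∀ i, ProperSpace (X i) := fun i => FiniteDimensional.proper_real (X i)
  have : StrictConvexSpace ℝ (lp X p) := strictConvexSpace_lp
    (ENNReal.toReal_one ▸ (ENNReal.toReal_lt_toReal ENNReal.one_ne_top hp).2 hp1)
  obtain ⟨u, w, huw⟩ := exists_norm_smul_add_sub_eq_of_isometry_fan hf
  have hu : ‖u‖ = ‖v‖ := by simpa using huw 1 0 0
  have hw_sub (k l : ℕ) (hkl : k ≠ l) : ‖w k - w l‖ = s := by simpa [hs k l hkl] using huw 0 k l
  have hu_add (k l : ℕ) (hkl : k ≠ l) : ‖u + (w k - w l)‖ = t := by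
    simpa [ht k l hkl] using huw 1 k l
  have hs0 : 0 ≤ s := hs 0 1 zero_ne_one ▸ norm_nonneg _
  have hw_bdd (k : ℕ) : ‖w k - w 0‖ ≤ s := by
    rcases eq_or_ne k 0 with rfl | hk
    · simpa using hs0
    · exact (hw_sub k 0 hk).le
  obtain ⟨φ, hφ, z, hz⟩ := exists_subseq_tendsto_apply (zero_lt_one.trans hp1).ne' hw_bdd
  let x (k : ℕ) : lp X p := w (φ (k + 1)) - w (φ k)
  have hφ_ne (k : ℕ) : φ (k + 1) ≠ φ k := hφ.injective.ne k.succ_ne_self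
  have hx (i : ι) : Tendsto (fun k => x k i) atTop (𝓝 0) := by
    have hdiff := ((hz i).comp (tendsto_add_atTop_nat 1)).sub (hz i)
    simpa [x] using hdiff
  have hlim := tendsto_norm_add_rpow hp hx
    (tendsto_const_nhds.congr fun k => (hw_sub _ _ (hφ_ne k)).symm) u
  simp only [x, hu_add _ _ (hφ_ne _), hu] at hlim
  exact hst (tendsto_nhds_unique tendsto_const_nhds hlim)

end Fan

section SimpleFunctions

open MeasureTheory

variable {p : ℝ≥0∞} [Fact (1 ≤ p)]

lemma norm_rpow_sum_single_comp {ι β : Type*} [DecidableEq ι] [Fintype β] {E : Type*}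
    [NormedAddCommGroup E] (hp : p ≠ ∞) {e : β → ι} (he : e.Injective) (w : β → E) :
    ‖∑ b, lp.single (E := fun _ => E) p (e b) (w b)‖ ^ p.toReal = ∑ b, ‖w b‖ ^ p.toReal := by
  have hp0 : 0 < p.toReal := ENNReal.toReal_pos (zero_lt_one.trans_le Fact.out).ne' hp
  have hextend := lp.norm_sum_single (E := fun _ => E) hp0 (Function.extend e w 0)
    (Finset.univ.map ⟨e, he⟩)
  simpa only [Finset.sum_map, Function.Embedding.coeFn_mk, he.extend_apply] using hextend

lemma exists_lp_dist_rpow_eq_sum {E : Type*} [NormedAddCommGroup E] [NormedSpace ℝ E]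
    [Nontrivial E] (hp : p ≠ ∞) {β : Type*} [Fintype β] {c : β → ℝ} (hc : ∀ b, 0 ≤ c b) :
    ∃ T : (β → ℝ) → lp (fun _ : ℕ => E) p, ∀ g h,
      dist (T g) (T h) ^ p.toReal = ∑ b, c b * |g b - h b| ^ p.toReal := by
  have hp0 : 0 < p.toReal := ENNReal.toReal_pos (zero_lt_one.trans_le Fact.out).ne' hp
  obtain ⟨v, hv⟩ := exists_norm_eq E zero_le_one
  obtain ⟨e, he⟩ := Countable.exists_injective_nat β
  let coord (g : β → ℝ) (b : β) : E := (c b ^ p.toReal⁻¹ * g b) • v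
  refine ⟨fun g => ∑ b, lp.single (E := fun _ => E) p (e b) (coord g b), fun g h => ?_⟩
  have hcoord (b : β) : ‖coord g b - coord h b‖ ^ p.toReal = c b * |g b - h b| ^ p.toReal := by
    rw [← sub_smul, ← mul_sub, norm_smul, hv, mul_one, norm_mul, Real.norm_eq_abs (g b - h b),
      Real.norm_of_nonneg (Real.rpow_nonneg (hc b) _),
      Real.mul_rpow (Real.rpow_nonneg (hc b) _) (abs_nonneg _),
      Real.rpow_inv_rpow (hc b) hp0.ne']
  simp only [dist_eq_norm, ← Finset.sum_sub_distrib, norm_rpow_sum_single_comp hp he,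
    ← hcoord, ← lp.single_sub]

variable {Ω : Type*} [MeasurableSpace Ω] {μ : Measure Ω}

lemma Lp_norm_rpow_eq_integral (hp : p ≠ ∞) (f : Lp ℝ p μ) :
    ‖f‖ ^ p.toReal = ∫ ω, |f ω| ^ p.toReal ∂μ := by
  have hp0 : p ≠ 0 := (zero_lt_one.trans_le Fact.out).ne'
  rw [Lp.norm_def, toReal_eLpNorm (Lp.aestronglyMeasurable f),
    lpNorm_eq_integral_norm_rpow_toReal hp0 hp (Lp.aestronglyMeasurable f),
    Real.rpow_inv_rpow (integral_nonneg fun ω => by positivity) (ENNReal.toReal_pos hp0 hp).ne']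
  rfl

variable [IsFiniteMeasure μ] {E : Type*} [NormedAddCommGroup E] [NormedSpace ℝ E] [Nontrivial E]
  {ι : Type*} [Finite ι]

-- Finitely many simple functions are constant on the fibres of the function they form jointly; each
-- fibre, weighted by its measure, becomes a coordinate of `ℓ_p`.
lemma exists_lp_dist_rpow_eq_integral (hp : p ≠ ∞) (f : ι → SimpleFunc Ω ℝ) :
    ∃ g : ι → lp (fun _ : ℕ => E) p, ∀ i j,
      dist (g i) (g j) ^ p.toReal = ∫ ω, |f i ω - f j ω| ^ p.toReal ∂μ := by
  have hp0 : 0 < p.toReal := ENNReal.toReal_pos (zero_lt_one.trans_le Fact.out).ne' hp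
  have := Fintype.ofFinite ι
  let joint : SimpleFunc Ω (ι → ℝ) :=
    { toFun := fun ω i => f i ω
      measurableSet_fiber' := fun y =>
        measurable_pi_lambda _ (fun i => (f i).measurable) (measurableSet_singleton y)
      finite_range' := (Set.Finite.pi' fun i => (f i).finite_range).subset
        (Set.range_subset_iff.2 fun ω i => Set.mem_range_self ω) }
  obtain ⟨T, hT⟩ := exists_lp_dist_rpow_eq_sum (E := E) hp (β := joint.range)
    (c := fun y => μ.real (joint ⁻¹' {y.1})) fun y => measureReal_nonneg
  refine ⟨fun i => T fun y => y.1 i, fun i j => ?_⟩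
  let diff (y : ι → ℝ) : ℝ := |y i - y j| ^ p.toReal
  have hdiff : diff 0 = 0 := by simp [diff, hp0.ne']
  calc dist (T fun y => y.1 i) (T fun y => y.1 j) ^ p.toReal
      = ∑ y : joint.range, μ.real (joint ⁻¹' {y.1}) * diff y := hT _ _
    _ = ∑ y ∈ joint.range, μ.real (joint ⁻¹' {y}) • diff y :=
      Finset.sum_coe_sort joint.range fun y => μ.real (joint ⁻¹' {y}) • diff y
    _ = (joint.map diff).integral μ :=
      (joint.map_integral diff (SimpleFunc.integrable_of_isFiniteMeasure _) hdiff).symm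
    _ = ∫ ω, |f i ω - f j ω| ^ p.toReal ∂μ :=
      SimpleFunc.integral_eq_integral _ (SimpleFunc.integrable_of_isFiniteMeasure _)

theorem exists_lp_dist_eq_of_simpleFunc (hp : p ≠ ∞) (f : ι → Lp.simpleFunc ℝ p μ) :
    ∃ g : ι → lp (fun _ : ℕ => E) p, ∀ i j, dist (g i) (g j) = dist (f i) (f j) := by
  have hp0 : 0 < p.toReal := ENNReal.toReal_pos (zero_lt_one.trans_le Fact.out).ne' hp
  obtain ⟨g, hg⟩ := exists_lp_dist_rpow_eq_integral (μ := μ) (E := E) hp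
    fun i => Lp.simpleFunc.toSimpleFunc (f i)
  refine ⟨g, fun i j => (Real.rpow_left_inj dist_nonneg dist_nonneg hp0.ne').1 ?_⟩
  have hsub : ∀ᵐ ω ∂μ, ((f i : Lp ℝ p μ) - f j) ω =
      Lp.simpleFunc.toSimpleFunc (f i) ω - Lp.simpleFunc.toSimpleFunc (f j) ω := by
    filter_upwards [Lp.coeFn_sub (f i : Lp ℝ p μ) (f j),
      Lp.simpleFunc.toSimpleFunc_eq_toFun (f i), Lp.simpleFunc.toSimpleFunc_eq_toFun (f j)]
      with ω hω hi hj
    rw [hω, Pi.sub_apply, hi, hj]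
  rw [hg, Subtype.dist_eq, dist_eq_norm, Lp_norm_rpow_eq_integral hp]
  exact integral_congr_ae (hsub.mono fun ω hω => by simp only [hω])

end SimpleFunctions

section IndicatorNorms

open MeasureTheory

variable {p : ℝ≥0∞} [Fact (1 ≤ p)] {Ω : Type*} [MeasurableSpace Ω] {μ : Measure Ω}
  [IsFiniteMeasure μ]

lemma norm_rpow_const_add_indicator_sub_indicator (hp : p ≠ ∞) {A B : Set Ω}
    (hA : MeasurableSet A) (hB : MeasurableSet B) (c : ℝ) :
    ‖Lp.const p μ c + (indicatorConstLp p hA (measure_ne_top μ A) (1 : ℝ) -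
        indicatorConstLp p hB (measure_ne_top μ B) 1)‖ ^ p.toReal =
      μ.real Set.univ * |c| ^ p.toReal + μ.real (A \ B) * (|c + 1| ^ p.toReal - |c| ^ p.toReal) +
        μ.real (B \ A) * (|c - 1| ^ p.toReal - |c| ^ p.toReal) := by
  have hfun : ∀ᵐ ω ∂μ, |(Lp.const p μ c + (indicatorConstLp p hA (measure_ne_top μ A) (1 : ℝ) -
        indicatorConstLp p hB (measure_ne_top μ B) 1) : Lp ℝ p μ) ω| ^ p.toReal =
      |c| ^ p.toReal + (A \ B).indicator (fun _ => |c + 1| ^ p.toReal - |c| ^ p.toReal) ω +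
        (B \ A).indicator (fun _ => |c - 1| ^ p.toReal - |c| ^ p.toReal) ω := by
    filter_upwards [Lp.coeFn_add (Lp.const p μ c) (indicatorConstLp p hA (measure_ne_top μ A) 1 -
        indicatorConstLp p hB (measure_ne_top μ B) 1), Lp.coeFn_const (p := p) (μ := μ) (c := c),
      Lp.coeFn_sub (indicatorConstLp p hA (measure_ne_top μ A) (1 : ℝ))
        (indicatorConstLp p hB (measure_ne_top μ B) 1),
      indicatorConstLp_coeFn (p := p) (hs := hA) (hμs := measure_ne_top μ A) (c := (1 : ℝ)),
      indicatorConstLp_coeFn (p := p) (hs := hB) (hμs := measure_ne_top μ B) (c := (1 : ℝ))]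
      with ω hadd hc hsub h_A h_B
    rw [hadd, Pi.add_apply, hc, hsub, Pi.sub_apply, h_A, h_B]
    by_cases hωA : ω ∈ A <;> by_cases hωB : ω ∈ B <;> simp [hωA, hωB, sub_eq_add_neg]
  have hconst := integrable_const (μ := μ) (|c| ^ p.toReal)
  have hintA := (integrable_const (μ := μ) (|c + 1| ^ p.toReal - |c| ^ p.toReal)).indicator
    (hA.diff hB)
  have hintB := (integrable_const (μ := μ) (|c - 1| ^ p.toReal - |c| ^ p.toReal)).indicator
    (hB.diff hA)
  rw [Lp_norm_rpow_eq_integral hp, integral_congr_ae hfun,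
    integral_add (hconst.fun_add hintA) hintB, integral_add hconst hintA,
    integral_indicator_const _ (hA.diff hB), integral_indicator_const _ (hB.diff hA),
    integral_const, smul_eq_mul, smul_eq_mul, smul_eq_mul]

end IndicatorNorms

section CoinTossing

open MeasureTheory

lemma exists_measurableSet_measureReal_diff_eq_quarter :
    ∃ (μ : Measure (ℕ → Bool)) (_ : IsProbabilityMeasure μ) (A : ℕ → Set (ℕ → Bool)),
      (∀ k, MeasurableSet (A k)) ∧ ∀ k l, k ≠ l → μ.real (A k \ A l) = 1 / 4 := by
  let coin : Measure Bool := (PMF.uniformOfFintype Bool).toMeasure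
  refine ⟨Measure.infinitePi fun _ => coin, inferInstance, fun k => {ω | ω k = true},
    fun k => measurableSet_eq_fun (measurable_pi_apply k) measurable_const, fun k l hkl => ?_⟩
  let t (i : ℕ) : Set Bool := {decide (i = k)}
  have hdiff : ({ω | ω k = true} \ {ω | ω l = true} : Set (ℕ → Bool)) =
      Set.pi ({k, l} : Finset ℕ) t := by
    ext ω
    simp [t, hkl.symm]
  have hcoin (b : Bool) : coin {b} = 2⁻¹ := by
    simp [coin]
  rw [hdiff, measureReal_def, Measure.infinitePi_pi _ fun i _ => measurableSet_singleton _,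
    Finset.prod_pair hkl, hcoin, hcoin]
  norm_num

end CoinTossing

section Counterexample

open MeasureTheory

variable {p : ℝ≥0∞} [Fact (1 ≤ p)]

lemma exists_simpleFunc_norm_rpow_eq (hp : p ≠ ∞) :
    ∃ (μ : Measure (ℕ → Bool)) (_ : IsProbabilityMeasure μ) (v : Lp ℝ p μ) (a : ℕ → Lp ℝ p μ),
      v ∈ Lp.simpleFunc ℝ p μ ∧ (∀ k, a k ∈ Lp.simpleFunc ℝ p μ) ∧ ‖v‖ = 1 ∧ (∀ k, ‖a k‖ ≤ 1) ∧
      (∀ k l, k ≠ l → ‖a k - a l‖ ^ p.toReal = 1 / 2) ∧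
      ∀ k l, k ≠ l → ‖v + (a k - a l)‖ ^ p.toReal = 1 / 2 + 2 ^ p.toReal / 4 := by
  have hp0 : p ≠ 0 := (zero_lt_one.trans_le Fact.out).ne'
  have hp0' : p.toReal ≠ 0 := (ENNReal.toReal_pos hp0 hp).ne'
  obtain ⟨μ, _, A, hA, hquarter⟩ := exists_measurableSet_measureReal_diff_eq_quarter
  let a (k : ℕ) : Lp ℝ p μ := indicatorConstLp p (hA k) (measure_ne_top μ _) 1
  have hnorm (k l : ℕ) (hkl : k ≠ l) (c : ℝ) : ‖Lp.const p μ c + (a k - a l)‖ ^ p.toReal =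
      |c| ^ p.toReal + 1 / 4 * (|c + 1| ^ p.toReal - |c| ^ p.toReal) +
        1 / 4 * (|c - 1| ^ p.toReal - |c| ^ p.toReal) := by
    simp only [a, norm_rpow_const_add_indicator_sub_indicator hp, hquarter k l hkl,
      hquarter l k hkl.symm, probReal_univ, one_mul]
  refine ⟨μ, inferInstance, Lp.const p μ 1, a, ?_, fun k => ?_, ?_, fun k => ?_,
    fun k l hkl => ?_, fun k l hkl => ?_⟩
  · rw [← indicatorConstLp_univ]
    exact (Lp.simpleFunc.indicatorConst p MeasurableSet.univ (measure_ne_top μ _) 1).2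
  · exact (Lp.simpleFunc.indicatorConst p (hA k) (measure_ne_top μ _) 1).2
  · rw [Lp.norm_const' p μ _ hp0 hp, norm_one, probReal_univ, Real.one_rpow, one_mul]
  · calc ‖a k‖ = μ.real (A k) ^ (1 / p.toReal) := by
          rw [norm_indicatorConstLp hp0 hp, norm_one, one_mul]
      _ ≤ 1 := Real.rpow_le_one measureReal_nonneg measureReal_le_one (by positivity)
  · rw [← zero_add (a k - a l), ← map_zero (Lp.constL p μ ℝ), Lp.constL_apply, hnorm k l hkl]
    norm_num [hp0']
  · rw [hnorm k l hkl, one_add_one_eq_two, sub_self, abs_one, abs_two, abs_zero, Real.one_rpow,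
      Real.zero_rpow hp0']
    ring

theorem exists_finitely_isometric_not_isometric_lp (hp1 : 1 < p) (hp : p ≠ ∞) (hp2 : p ≠ 2)
    {X : ℕ → Type*} [∀ n, NormedAddCommGroup (X n)] [∀ n, NormedSpace ℝ (X n)]
    [∀ n, FiniteDimensional ℝ (X n)] [∀ n, StrictConvexSpace ℝ (X n)] [Nontrivial (lp X p)]
    (hX : ∀ n, Nonempty (X n →ₗᵢ[ℝ] X (n + 1))) :
    ∃ (M : Type) (_ : MetricSpace M), MetricLocallyFinite M ∧
      (∀ S : Set M, S.Finite → ∃ f : S → lp X p, Isometry f) ∧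
      ¬ ∃ f : M → lp X p, Isometry f := by
  have hp0 : p.toReal ≠ 0 := (ENNReal.toReal_pos (zero_lt_one.trans hp1).ne' hp).ne'
  obtain ⟨μ, _, v, a, hv, ha, hv_norm, ha_norm, hs, ht⟩ := exists_simpleFunc_norm_rpow_eq hp
  refine ⟨fan v a, inferInstance, metricLocallyFinite_fan (norm_ne_zero_iff.1 ?_) ha_norm,
    fun S hS => ?_, ?_⟩
  · exact hv_norm ▸ one_ne_zero
  · have : Finite S := hS
    obtain ⟨J⟩ := nonempty_linearIsometry_lp_lp hp hX
    obtain ⟨g, hg⟩ := exists_lp_dist_eq_of_simpleFunc (E := lp X p) hp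
      fun x : S => ⟨x.1.1, fan_subset_addSubgroup hv ha x.1.2⟩
    exact ⟨J ∘ g, J.isometry.comp (Isometry.of_dist_eq hg)⟩
  · refine not_exists_isometry_fan_lp (s := (1 / 2) ^ p.toReal⁻¹)
      (t := (1 / 2 + 2 ^ p.toReal / 4) ^ p.toReal⁻¹) hp1 hp
      (fun k l hkl => (Real.eq_rpow_inv (norm_nonneg _) (by positivity) hp0).2 (hs k l hkl))
      (fun k l hkl => (Real.eq_rpow_inv (norm_nonneg _) (by positivity) hp0).2 (ht k l hkl))
      fun h => hp2 ?_
    rw [Real.rpow_inv_rpow (by positivity) hp0, Real.rpow_inv_rpow (by positivity) hp0, hv_norm,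
      Real.one_rpow] at h
    have hpow : (2 : ℝ) ^ p.toReal = 2 ^ (2 : ℝ) := by norm_num; linarith
    rw [← ENNReal.ofReal_toReal hp, (Real.rpow_right_inj two_pos (by norm_num)).1 hpow]
    norm_num

end Counterexample

theorem exists_isBilipschitzEmbedding_of_finite_subsets {p : ℝ≥0∞} [Fact (1 ≤ p)] (hp : p ≠ ∞)
    {X : ℕ → Type*} [∀ n, NormedAddCommGroup (X n)] [∀ n, NormedSpace ℝ (X n)]
    (hX : ∀ n, Nonempty (X n →ₗᵢ[ℝ] X (n + 1))) {ε C : ℝ} (hε : 0 < ε) (hC : 1 ≤ C)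
    {A : Type*} [MetricSpace A] (hA : MetricLocallyFinite A)
    (h : ∀ S : Set A, S.Finite → ∃ f : S → lp X p, IsBilipschitzEmbedding C f) :
    ∃ f : A → lp X p, IsBilipschitzEmbedding ((1 + ε) * C) f := by
  obtain ⟨J⟩ := nonempty_linearIsometry_lp_lp hp hX
  obtain ⟨f, r, hr, hf⟩ := exists_bilipschitz_lp_of_finite_subsets p hε hC hA h
  exact ⟨J ∘ f, r, hr, fun u v => by simpa only [Function.comp_apply, J.dist_map] using hf u v⟩

theorem strictly_convex_lp_sum_D_eq_one_plus_general
    (p : ℝ≥0∞) [Fact (1 ≤ p)] (hp1 : 1 < p) (hptop : p ≠ ∞) (hp2 : p ≠ 2)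
    (X : ℕ → Type*) [∀ n, NormedAddCommGroup (X n)] [∀ n, NormedSpace ℝ (X n)]
    [∀ n, FiniteDimensional ℝ (X n)] [∀ n, StrictConvexSpace ℝ (X n)] [Nontrivial (lp X p)]
    (hX : ∀ n, Nonempty (X n →ₗᵢ[ℝ] X (n + 1))) :
    (∀ (ε C : ℝ), 0 < ε → 1 ≤ C →
      ∀ (A : Type*) [MetricSpace A], MetricLocallyFinite A →
        (∀ S : Set A, S.Finite → ∃ f : S → lp X p, IsBilipschitzEmbedding C f) →
        ∃ f : A → lp X p, IsBilipschitzEmbedding ((1 + ε) * C) f) ∧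
    (∃ (M : Type) (_ : MetricSpace M), MetricLocallyFinite M ∧
      (∀ S : Set M, S.Finite → ∃ f : S → lp X p, Isometry f) ∧
      ¬ ∃ f : M → lp X p, Isometry f) :=
  ⟨fun _ _ hε hC _ _ hA h => exists_isBilipschitzEmbedding_of_finite_subsets hptop hX hε hC hA h,
    exists_finitely_isometric_not_isometric_lp hp1 hptop hp2 hX⟩

theorem strictly_convex_lp_sum_D_eq_one_plus
    (p : ℝ≥0∞) [Fact (1 ≤ p)] (hp1 : 1 < p) (hptop : p ≠ ∞) (hp2 : p ≠ 2)
    (X : ℕ → Type*) [∀ n, NormedAddCommGroup (X n)] [∀ n, NormedSpace ℝ (X n)]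
    [∀ n, FiniteDimensional ℝ (X n)] [∀ n, StrictConvexSpace ℝ (X n)]
    (hnested : ∀ n, ∃ J : X n →ₗᵢ[ℝ] X (n + 1), ¬ Function.Surjective J) :
    (∀ (ε C : ℝ), 0 < ε → 1 ≤ C →
      ∀ (A : Type*) [MetricSpace A], MetricLocallyFinite A →
        (∀ S : Set A, S.Finite → ∃ f : S → lp X p, IsBilipschitzEmbedding C f) →
        ∃ f : A → lp X p, IsBilipschitzEmbedding ((1 + ε) * C) f) ∧
    (∃ (M : Type) (_ : MetricSpace M), MetricLocallyFinite M ∧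
      (∀ S : Set M, S.Finite → ∃ f : S → lp X p, Isometry f) ∧
      ¬ ∃ f : M → lp X p, Isometry f) := by
  obtain ⟨J, hJ⟩ := hnested 0
  have : Nontrivial (X 1) :=
    not_subsingleton_iff_nontrivial.1 fun _ => hJ (Function.surjective_to_subsingleton J)
  have : Nontrivial (lp X p) := (lp.isometry_single (E := X) 1).injective.nontrivial
  exact strictly_convex_lp_sum_D_eq_one_plus_general p hp1 hptop hp2 X
    fun n => (hnested n).nonempty
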